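/- Both [Inf G SMon Bc] and [Inf G SMon^d Bc] are proper subsets of [Inf G Mon^& Bc]; in particular, every strongly monotone and every dual strongly monotone behaviorally correct learner on informants for a learned language automatically satisfies both Mon and Mon^d. -/

import Mathlib

open Filter Classical

namespace InfBc

/-! ### Basic notions: r.e. sets, informants, learners -/

/-- The `e`-th recursively enumerable set (via an acceptable numbering of
partial computable functions, `W e = dom φ_e`). -/
def W (e : ℕ) : Set ℕ := {x | ((Denumerable.ofNat Nat.Partrec.Code e).eval x).Dom}

/-- A language is recursively enumerable. -/
def RE (L : Set ℕ) : Prop := ∃ e, W e = L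

abbrev Datum := ℕ × Bool
abbrev Seq := List Datum
abbrev Informant := ℕ → Datum
abbrev HypSeq := ℕ → Part ℕ
/-- Learners are partial functions; all input types are coded into `ℕ`. -/
abbrev Learner := ℕ →. ℕ
abbrev Restriction := HypSeq → Informant → Prop

/-- Positive information of an infinite sequence. -/
def posI (I : Informant) : Set ℕ := {x | ∃ n, I n = (x, true)}
/-- Negative information of an infinite sequence. -/
def negI (I : Informant) : Set ℕ := {x | ∃ n, I n = (x, false)}

/-- `I` is an informant for the language `L`. -/
def IsInformant (I : Informant) (L : Set ℕ) : Prop := posI I = L ∧ negI I = Lᶜ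

/-- `I` is an informant (for some language), i.e. `I ∈ Inf`. -/
def IsInf (I : Informant) : Prop := IsInformant I (posI I)

/-- `I` is a canonical informant. -/
def Canonical (I : Informant) : Prop := ∀ x, I x = (x, true) ∨ I x = (x, false)

/-- `I[n]`, the length-`n` initial segment of `I`. -/
def segment (I : Informant) (n : ℕ) : Seq := (List.range n).map I

/-- Positive information of a finite sequence. -/
def posS (σ : Seq) : Set ℕ := {x | (x, true) ∈ σ}
/-- Negative information of a finite sequence. -/
def negS (σ : Seq) : Set ℕ := {x | (x, false) ∈ σ}
/-- The content of a finite sequence, as a set. -/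
def contentS (σ : Seq) : Set Datum := {a | a ∈ σ}

/-! ### Interaction operators -/

abbrev InteractionOperator := Learner → Informant → HypSeq

/-- Full-information (Gold-style) interaction: `G(h,I)(i) = h(I[i])`. -/
def Gop : InteractionOperator := fun h I i => h (Encodable.encode (segment I i))

/-- Set-driven interaction: `Sd(h,I)(i) = h(content(I[i]))`. -/
def Sdop : InteractionOperator := fun h I i => h (Encodable.encode (segment I i).toFinset)

/-- The iterated evaluation of an iterative learner on a finite sequence:
start with the initial hypothesis `h(none)` and feed the data one by one. -/
def iterExtend (h : Learner) (σ : Seq) : Part ℕ :=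
  σ.foldl (fun pe a => pe.bind fun e => h (Encodable.encode (some (e, a))))
    (h (Encodable.encode (none : Option (ℕ × Datum))))

/-- Iterative interaction: `It(h,I)(i)` is obtained by feeding `I[i]` one datum
at a time, each time updating the previous hypothesis. -/
def Itop : InteractionOperator := fun h I i => iterExtend h (segment I i)

/-- An iterative learner is confluent if the order and multiplicity in which
the content is presented does not matter. -/
def ConfluentLearner (h : Learner) : Prop :=
  ∀ σ τ : Seq, contentS σ = contentS τ → iterExtend h σ = iterExtend h τ

/-- Confluently iterative interaction. -/
noncomputable def CflItop : InteractionOperator := fun h I i =>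
  if ConfluentLearner h then iterExtend h (segment I i) else Part.none

/-- `β ≼ β'`: every (partial computable) `β`-learner can be translated into a
`β'`-learner with the same hypothesis sequence on every informant. -/
def OpLe (β β' : InteractionOperator) : Prop :=
  ∀ h : Learner, Partrec h → ∃ h' : Learner, Partrec h' ∧
    ∀ I : Informant, IsInf I → ∀ n, β h I n = β' h' I n

/-! ### Learning restrictions -/

/-- The trivial restriction `T`. -/
def TT : Restriction := fun _ _ => True

/-- Explanatory identification. -/
def Ex : Restriction := fun p I =>
  ∃ q, W q = posI I ∧ ∀ᶠ n in atTop, p n = Part.some q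

/-- Behaviorally correct identification. -/
def Bc : Restriction := fun p I => ∀ᶠ n in atTop, ∃ e ∈ p n, W e = posI I

/-- Consistency of a hypothesis with a finite sequence of data. -/
def ConsH (e : ℕ) (σ : Seq) : Prop := posS σ ⊆ W e ∧ negS σ ∩ W e = ∅

/-- Consistency of a hypothesis sequence with an informant. -/
def Cons : Restriction := fun p I => ∀ n, ∃ e ∈ p n, ConsH e (segment I n)

/-- Strongly monotone. -/
def SMon : Restriction := fun p _ =>
  ∀ s t, s ≤ t → ∀ e ∈ p s, ∀ e' ∈ p t, W e ⊆ W e'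

/-- Dual strongly monotone. -/
def SMond : Restriction := fun p _ =>
  ∀ s t, s ≤ t → ∀ e ∈ p s, ∀ e' ∈ p t, W e' ⊆ W e

/-- Monotone. -/
def Mon : Restriction := fun p I =>
  ∀ s t, s ≤ t → ∀ e ∈ p s, ∀ e' ∈ p t, W e ∩ posI I ⊆ W e' ∩ posI I

/-- Dual monotone. -/
def Mond : Restriction := fun p I =>
  ∀ s t, s ≤ t → ∀ e ∈ p s, ∀ e' ∈ p t, (W e)ᶜ ∩ negI I ⊆ (W e')ᶜ ∩ negI I

/-- Weakly monotone. -/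
def WMon : Restriction := fun p I =>
  ∀ s t, s ≤ t → ∀ e ∈ p s, ConsH e (segment I t) → ∀ e' ∈ p t, W e ⊆ W e'

/-- Dual weakly monotone. -/
def WMond : Restriction := fun p I =>
  ∀ s t, s ≤ t → ∀ e ∈ p s, ConsH e (segment I t) → ∀ e' ∈ p t, W e' ⊆ W e

/-- Cautious. -/
def Caut : Restriction := fun p _ =>
  ∀ s t, s < t → ∀ e ∈ p s, ∀ e' ∈ p t, ¬ W e' ⊂ W e

/-- Target cautious. -/
def CautTar : Restriction := fun p I =>
  ∀ s, ∀ e ∈ p s, ¬ posI I ⊂ W e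

/-- Finitely cautious. -/
def CautFin : Restriction := fun p _ =>
  ∀ s t, s < t → ∀ e ∈ p s, ∀ e' ∈ p t, W e' ⊂ W e → (W e').Infinite

/-- Infinitely cautious. -/
def CautInf : Restriction := fun p _ =>
  ∀ s t, s < t → ∀ e ∈ p s, ∀ e' ∈ p t, W e' ⊂ W e → (W e').Finite

/-! ### Learnability -/

/-- The class of admissible learners: all partial computable learners. -/
def AllL : Learner → Prop := fun _ => True
/-- The class of admissible learners: total computable learners (`ℛ`). -/
def TotalL : Learner → Prop := fun h => ∀ x, (h x).Dom
/-- Admissible informants: all informants (`Inf`). -/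
def AllI : Informant → Prop := fun _ => True

/-- `h` learns `L` in the setting given by admissible informants `P`,
interaction operator `β` and local restriction `δ`. -/
def LearnsWith (P : Informant → Prop) (β : InteractionOperator) (δ : Restriction)
    (h : Learner) (L : Set ℕ) : Prop :=
  RE L ∧ ∀ I : Informant, P I → IsInformant I L → δ (β h I) I

/-- `[τ(α) C P β δ]`: the collection of all classes of languages learnable by
some learner in `C` that satisfies the global restriction `α` on all admissible
informants, under interaction operator `β` and local restriction `δ`. -/
def Learnable (α : Restriction) (C : Learner → Prop) (P : Informant → Prop)
    (β : InteractionOperator) (δ : Restriction) : Set (Set (Set ℕ)) :=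
  {𝓛 | ∃ h : Learner, Partrec h ∧ C h ∧
        (∀ I : Informant, IsInf I → P I → α (β h I) I) ∧
        ∀ L ∈ 𝓛, LearnsWith P β δ h L}

/-! ### Properties of restrictions -/

/-- A learning restriction is delayable if it is preserved under postponing
hypotheses along a non-decreasing unbounded function. -/
def Delayable (δ : Restriction) : Prop :=
  ∀ I I' : Informant, IsInf I → IsInf I' → Set.range I = Set.range I' →
    ∀ (p : HypSeq) (s : ℕ → ℕ), Monotone s → (∀ m, ∃ n, m ≤ s n) →
      δ p I → (∀ n, contentS (segment I (s n)) ⊆ contentS (segment I' n)) →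
      δ (fun n => p (s n)) I'

/-- A learning restriction is semantic if it is indifferent to replacing the
hypothesis sequence by a semantically equivalent one. -/
def Semantic (δ : Restriction) : Prop :=
  ∀ (p p' : HypSeq) (I : Informant), δ p I →
    (∀ i, (p i).Dom ↔ (p' i).Dom) →
    (∀ i, ∀ e ∈ p i, ∀ e' ∈ p' i, W e = W e') →
    δ p' I

/-!
Along a strongly monotone, behaviorally correct sequence every hypothesis is contained in the
target, since the correct hypotheses come later; dually, every hypothesis of a dual strongly
monotone sequence contains the target. Together with strong monotonicity this gives `Mon` and
`Mon^d`.

The same observation separates the classes. A hypothesis for `L` output on a finite initial segment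
of an informant for `L` is also output for every learned `M` agreeing with `L` far enough, so
`L ⊆ M` for a strongly monotone learner and `M ⊆ L` for a dual one. Comparing `ℕ` with `ℕ \ {n}`
excludes the cofinite languages from `SMon`, and comparing `∅` with `{n}` excludes the finite
languages from `SMon^d`. Conversely, the positive data seen so far are a strongly monotone
hypothesis that is eventually correct on finite languages, and the complement of the negative data
is the dual one for cofinite languages.
-/

/-! ### Strong monotonicity along a relation -/

/-- Every hypothesis is `R`-related to all later ones. `SMon` and `SMond` unfold to the
cases `R = (· ⊆ ·)` and `R = (· ⊇ ·)`, which lets the arguments common to both be given once. -/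
def RelMon (R : Set ℕ → Set ℕ → Prop) : Restriction := fun p _ =>
  ∀ s t, s ≤ t → ∀ e ∈ p s, ∀ e' ∈ p t, R (W e) (W e')

section Restrictions

variable {R : Set ℕ → Set ℕ → Prop} {p : HypSeq} {I : Informant} {s e : ℕ}

lemma RelMon.rel_posI (hR : RelMon R p I) (hBc : Bc p I) (he : e ∈ p s) : R (W e) (posI I) := by
  obtain ⟨t, ⟨e', he', hWe'⟩, hst⟩ := (hBc.and (eventually_ge_atTop s)).exists
  exact hWe' ▸ hR s t hst e he e' he'

lemma SMon.mon (hS : SMon p I) : Mon p I :=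
  fun s t hst e he e' he' => Set.inter_subset_inter_left _ (hS s t hst e he e' he')

lemma SMon.mond (hS : SMon p I) (hBc : Bc p I) (hI : IsInf I) : Mond p I := by
  intro s t _ e _ e' he' x hx
  have hle : W e' ⊆ posI I := RelMon.rel_posI (R := (· ⊆ ·)) hS hBc he'
  have hxI : x ∈ (posI I)ᶜ := hI.2 ▸ hx.2
  exact ⟨fun hxe' => hxI (hle hxe'), hx.2⟩

lemma SMond.mon (hS : SMond p I) (hBc : Bc p I) : Mon p I := by
  intro s t _ e _ e' he' x hx
  have hle : posI I ⊆ W e' := RelMon.rel_posI (R := (· ⊇ ·)) hS hBc he'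
  exact ⟨hle hx.2, hx.2⟩

lemma SMond.mond (hS : SMond p I) : Mond p I :=
  fun s t hst e he e' he' =>
    Set.inter_subset_inter_left _ (Set.compl_subset_compl.2 (hS s t hst e he e' he'))

end Restrictions

lemma IsInformant.isInf {I : Informant} {L : Set ℕ} (hI : IsInformant I L) : IsInf I :=
  ⟨rfl, hI.1 ▸ hI.2⟩

lemma learnable_mono {α : Restriction} {C : Learner → Prop} {P : Informant → Prop}
    {β : InteractionOperator} {δ δ' : Restriction} (hδ : ∀ p I, IsInf I → δ p I → δ' p I) :
    Learnable α C P β δ ⊆ Learnable α C P β δ' := by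
  rintro 𝓛 ⟨h, hh, hC, hα, hL⟩
  exact ⟨h, hh, hC, hα, fun L hL𝓛 =>
    ⟨(hL L hL𝓛).1, fun I hP hI => hδ _ _ hI.isInf ((hL L hL𝓛).2 I hP hI)⟩⟩

/-! ### Initial segments of informants -/

/-- The informant for `L` that lists the natural numbers in increasing order. -/
noncomputable def canonicalInformant (L : Set ℕ) : Informant := fun n => (n, decide (n ∈ L))

lemma isInformant_canonicalInformant (L : Set ℕ) : IsInformant (canonicalInformant L) L := by
  constructor <;> ext x <;> simp [posI, negI, canonicalInformant]

lemma canonical_canonicalInformant (L : Set ℕ) : Canonical (canonicalInformant L) := by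
  intro x
  by_cases hx : x ∈ L <;> simp [canonicalInformant, hx]

lemma segment_canonicalInformant_congr {L M : Set ℕ} {n : ℕ} (hLM : ∀ x < n, x ∈ L ↔ x ∈ M) :
    segment (canonicalInformant L) n = segment (canonicalInformant M) n :=
  List.map_congr_left fun x hx => by
    simp only [canonicalInformant, hLM x (List.mem_range.1 hx)]

lemma mem_segment {I : Informant} {n : ℕ} {a : Datum} : a ∈ segment I n ↔ ∃ i < n, I i = a := by
  simp [segment]

lemma segment_subset_segment (I : Informant) {s t : ℕ} (hst : s ≤ t) :
    segment I s ⊆ segment I t :=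
  List.map_subset I (List.range_subset.2 hst)

lemma eventually_mem_segment (I : Informant) (i : ℕ) : ∀ᶠ n in atTop, I i ∈ segment I n :=
  (eventually_gt_atTop i).mono fun _ hn => mem_segment.2 ⟨i, hn, rfl⟩

lemma eventually_setOf_mem_segment_eq {I : Informant} {v : Bool}
    (hfin : {x | ∃ n, I n = (x, v)}.Finite) :
    ∀ᶠ n in atTop, {x | (x, v) ∈ segment I n} = {x | ∃ n, I n = (x, v)} := by
  have hseen : ∀ᶠ n in atTop, ∀ x ∈ {x | ∃ n, I n = (x, v)}, (x, v) ∈ segment I n :=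
    hfin.eventually_all.2 fun x ⟨i, hi⟩ => hi ▸ eventually_mem_segment I i
  filter_upwards [hseen] with n hn
  refine Set.Subset.antisymm (fun x hx => ?_) hn
  obtain ⟨i, -, hi⟩ := mem_segment.1 hx
  exact ⟨i, hi⟩

lemma eventually_posS_segment_eq {I : Informant} (hfin : (posI I).Finite) :
    ∀ᶠ n in atTop, posS (segment I n) = posI I :=
  eventually_setOf_mem_segment_eq hfin

lemma eventually_negS_segment_eq {I : Informant} (hfin : (negI I).Finite) :
    ∀ᶠ n in atTop, negS (segment I n) = negI I :=
  eventually_setOf_mem_segment_eq hfin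

/-! ### Necessary conditions for learnability -/

section Learnable

variable {α : Restriction} {C : Learner → Prop} {P : Informant → Prop}

lemma exists_forall_rel_of_mem_learnable {R : Set ℕ → Set ℕ → Prop} {𝓛 : Set (Set ℕ)} {L : Set ℕ}
    (hP : ∀ I, Canonical I → P I)
    (h𝓛 : 𝓛 ∈ Learnable α C P Gop (fun p I => RelMon R p I ∧ Bc p I)) (hL : L ∈ 𝓛) :
    ∃ n, ∀ M ∈ 𝓛, (∀ x < n, x ∈ L ↔ x ∈ M) → R L M := by
  obtain ⟨h, -, -, -, hlearn⟩ := h𝓛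
  have hcan : ∀ M ∈ 𝓛, RelMon R (Gop h (canonicalInformant M)) (canonicalInformant M) ∧
      Bc (Gop h (canonicalInformant M)) (canonicalInformant M) := fun M hM =>
    (hlearn M hM).2 _ (hP _ (canonical_canonicalInformant M)) (isInformant_canonicalInformant M)
  obtain ⟨n, e, he, hWe⟩ := (hcan L hL).2.exists
  refine ⟨n, fun M hM hLM => ?_⟩
  have heM : e ∈ Gop h (canonicalInformant M) n := by
    rwa [Gop, ← segment_canonicalInformant_congr hLM]
  have hrel := (hcan M hM).1.rel_posI (hcan M hM).2 heM
  rwa [hWe, (isInformant_canonicalInformant L).1, (isInformant_canonicalInformant M).1] at hrel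

lemma setOf_finite_compl_notMem_learnable_smon (hP : ∀ I, Canonical I → P I) :
    {L : Set ℕ | Lᶜ.Finite} ∉ Learnable α C P Gop (fun p I => SMon p I ∧ Bc p I) := by
  intro hlearn
  obtain ⟨n, hn⟩ := exists_forall_rel_of_mem_learnable (R := (· ⊆ ·)) (L := Set.univ) hP hlearn
    (by simp)
  have hsub : Set.univ ⊆ ({n}ᶜ : Set ℕ) := hn {n}ᶜ (by simp) fun x hx => by simp [hx.ne]
  exact hsub (Set.mem_univ n) rfl

lemma setOf_finite_notMem_learnable_smond (hP : ∀ I, Canonical I → P I) :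
    {L : Set ℕ | L.Finite} ∉ Learnable α C P Gop (fun p I => SMond p I ∧ Bc p I) := by
  intro hlearn
  obtain ⟨n, hn⟩ := exists_forall_rel_of_mem_learnable (R := (· ⊇ ·)) (L := ∅) hP hlearn (by simp)
  have hsub : ({n} : Set ℕ) ⊆ ∅ := hn {n} (by simp) fun x hx => by simp [hx.ne]
  exact hsub (Set.mem_singleton n)

end Learnable

/-! ### Construction of learners -/

lemma exists_computable_W_eq {α : Type*} [Primcodable α] {A : α → Set ℕ}
    (hA : REPred fun q : α × ℕ => q.2 ∈ A q.1) :
    ∃ g : α → ℕ, Computable g ∧ ∀ a, W (g a) = A a := by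
  obtain ⟨c, hc⟩ := Nat.Partrec.Code.exists_code.1 hA
  refine ⟨fun a => Encodable.encode (c.curry (Encodable.encode a)), ?_, fun a => ?_⟩
  · exact Computable.encode.comp
      (Nat.Partrec.Code.primrec₂_curry.to_comp.comp (Computable.const c) Computable.encode)
  · ext x
    simp [W, hc, Nat.Partrec.Code.eval_curry, Part.assert]

lemma exists_partrec_Gop_eq_some {g : Seq → ℕ} (hg : Computable g) :
    ∃ h : Learner, Partrec h ∧ ∀ I n, Gop h I n = Part.some (g (segment I n)) :=
  ⟨fun n => Part.some (g ((Encodable.decode n).getD [])),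
    (hg.comp (Computable.option_getD Computable.decode (Computable.const []))).partrec,
    fun I n => by simp [Gop]⟩

lemma mem_learnable_of_rePred {R : Set ℕ → Set ℕ → Prop} {P : Informant → Prop}
    {𝓛 : Set (Set ℕ)} {A : Seq → Set ℕ} (hA : REPred fun q : Seq × ℕ => q.2 ∈ A q.1)
    (hmono : ∀ σ τ : Seq, σ ⊆ τ → R (A σ) (A τ))
    (hlim : ∀ L ∈ 𝓛, ∀ I, IsInformant I L → ∀ᶠ n in atTop, A (segment I n) = L) :
    𝓛 ∈ Learnable TT AllL P Gop (fun p I => RelMon R p I ∧ Bc p I) := by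
  obtain ⟨g, hg, hWg⟩ := exists_computable_W_eq hA
  obtain ⟨h, hh, hGop⟩ := exists_partrec_Gop_eq_some hg
  refine ⟨h, hh, trivial, fun _ _ _ => trivial, fun L hL => ⟨?_, fun I _ hI => ⟨?_, ?_⟩⟩⟩
  · obtain ⟨n, hn⟩ := (hlim L hL _ (isInformant_canonicalInformant L)).exists
    exact ⟨_, (hWg _).trans hn⟩
  · intro s t hst e he e' he'
    rw [hGop, Part.mem_some_iff] at he he'
    rw [he, he', hWg, hWg]
    exact hmono _ _ (segment_subset_segment I hst)
  · filter_upwards [hlim L hL I hI] with n hn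
    exact ⟨_, hGop I n ▸ Part.mem_some _, by rw [hWg, hn, hI.1]⟩

lemma computablePred_mem_seq (v : Bool) :
    ComputablePred fun q : Seq × ℕ => (q.2, v) ∈ q.1 := by
  have hmem : PrimrecRel fun (σ : Seq) (a : Datum) => ∃ b ∈ σ, b = a :=
    PrimrecRel.exists_mem_list Primrec.eq
  exact ((hmem.comp Primrec.fst (Primrec.pair Primrec.snd (Primrec.const v))).of_eq
    fun q => by simp).computablePred

lemma setOf_finite_mem_learnable_smon {P : Informant → Prop} :
    {L : Set ℕ | L.Finite} ∈ Learnable TT AllL P Gop (fun p I => SMon p I ∧ Bc p I) := by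
  refine mem_learnable_of_rePred (R := (· ⊆ ·)) (A := posS) (computablePred_mem_seq true).to_re
    (fun σ τ hστ x hx => hστ hx) ?_
  rintro L hL I ⟨rfl, -⟩
  exact eventually_posS_segment_eq hL

lemma setOf_finite_compl_mem_learnable_smond {P : Informant → Prop} :
    {L : Set ℕ | Lᶜ.Finite} ∈ Learnable TT AllL P Gop (fun p I => SMond p I ∧ Bc p I) := by
  refine mem_learnable_of_rePred (R := (· ⊇ ·)) (A := fun σ => (negS σ)ᶜ)
    (computablePred_mem_seq false).not.to_re (fun σ τ hστ x hx hxσ => hx (hστ hxσ)) ?_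
  intro L hL I hI
  have hfin : (negI I).Finite := hI.2 ▸ hL
  filter_upwards [eventually_negS_segment_eq hfin] with n hn
  rw [hn, hI.2, compl_compl]

/-- Both `[Inf G SMon Bc]` and `[Inf G SMon^d Bc]` are proper
subsets of `[Inf G Mon^& Bc]`; in particular, on any informant, strongly
monotone (or dual strongly monotone) behaviorally correct hypothesis sequences
automatically satisfy both `Mon` and `Mon^d`. -/
theorem smon_variants_proper_subsets_of_combined_mon :
    (∀ (p : HypSeq) (I : Informant), IsInf I → SMon p I → Bc p I →
      Mon p I ∧ Mond p I) ∧
    (∀ (p : HypSeq) (I : Informant), IsInf I → SMond p I → Bc p I →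
      Mon p I ∧ Mond p I) ∧
    Learnable TT AllL AllI Gop (fun p I => SMon p I ∧ Bc p I) ⊂
      Learnable TT AllL AllI Gop (fun p I => (Mon p I ∧ Mond p I) ∧ Bc p I) ∧
    Learnable TT AllL AllI Gop (fun p I => SMond p I ∧ Bc p I) ⊂
      Learnable TT AllL AllI Gop (fun p I => (Mon p I ∧ Mond p I) ∧ Bc p I) := by
  have smon_subset : Learnable TT AllL AllI Gop (fun p I => SMon p I ∧ Bc p I) ⊆
      Learnable TT AllL AllI Gop (fun p I => (Mon p I ∧ Mond p I) ∧ Bc p I) :=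
    learnable_mono fun _ _ hI h => ⟨⟨h.1.mon, h.1.mond h.2 hI⟩, h.2⟩
  have smond_subset : Learnable TT AllL AllI Gop (fun p I => SMond p I ∧ Bc p I) ⊆
      Learnable TT AllL AllI Gop (fun p I => (Mon p I ∧ Mond p I) ∧ Bc p I) :=
    learnable_mono fun _ _ _ h => ⟨⟨h.1.mon h.2, h.1.mond⟩, h.2⟩
  refine ⟨fun _ _ hI hS hBc => ⟨hS.mon, hS.mond hBc hI⟩, fun _ _ _ hS hBc => ⟨hS.mon hBc, hS.mond⟩,
    ⟨smon_subset, fun hle => ?_⟩, ⟨smond_subset, fun hle => ?_⟩⟩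
  · exact setOf_finite_compl_notMem_learnable_smon (fun _ _ => trivial)
      (hle (smond_subset setOf_finite_compl_mem_learnable_smond))
  · exact setOf_finite_notMem_learnable_smond (fun _ _ => trivial)
      (hle (smon_subset setOf_finite_mem_learnable_smon))

end InfBc
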